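/- For every i ∈ {1,…,n} and every symmetric matrix I_i ∈ ℝ^{3×3}, each entry of J_{ω,i}(q)^T R_i^0(q) I_i (R_i^0(q))^T J_{ω,i}(q) ∈ ℝ^{n×n} is a polynomial function of cos(q_r), sin(q_r) for the revolute joints r ≤ i: there exists a real multivariate polynomial in formal variables c_r, s_r (r ∈ I_r, r ≤ i), of total degree at most 2·|{r ∈ I_r : r ≤ i}|, whose every monomial satisfies deg(c_b) + deg(s_b) ≤ 2 for each b, and whose evaluation at c_r = cos(q_r), s_r = sin(q_r) equals that entry for all q ∈ ℝ^n. -/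

import Mathlib

/-!
The relative rotations are orthogonal, so in `(R_i^0)ᵀ J_{ω,i}` the common prefix `R_{j-1}^0`
cancels: for a revolute joint `j ≤ i` the `j`-th column is
`u_j = (R_i^{i-1})ᵀ ⋯ (R_j^{j-1})ᵀ e_3`, in which every joint angle occurs in at most one factor.
By the angle addition formulas the entries of `R_b^{b-1}` are constant when `b` is prismatic and
affine in `cos q_b`, `sin q_b` when `b` is revolute, so the components of `u_j` have joint degree
at most one in `(c_b, s_b)` for every revolute `b ≤ i` and degree zero for the other joints
(`JointPoly.linkAxis`). The required entry is `u_jᵀ I_i u_k`, hence it has joint degree at most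
two, and the total degree bound follows by summing over the joints.
-/


noncomputable section

open Matrix Real

/-- Elementary rotation about the z-axis. -/
def RzMat (θ : ℝ) : Matrix (Fin 3) (Fin 3) ℝ :=
  !![Real.cos θ, -Real.sin θ, 0;
     Real.sin θ, Real.cos θ, 0;
     0, 0, 1]

/-- Elementary rotation about the x-axis. -/
def RxMat (α : ℝ) : Matrix (Fin 3) (Fin 3) ℝ :=
  !![1, 0, 0;
     0, Real.cos α, -Real.sin α;
     0, Real.sin α, Real.cos α]

/-- DH joint angle `θ_b(q)`; `rev b = true` means that joint `b` is revolute
(`θ_b = θ0_b + q_b`), otherwise it is prismatic (`θ_b = θ0_b`). -/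
def dhTheta {n : ℕ} (rev : Fin n → Bool) (θ0 : Fin n → ℝ) (q : Fin n → ℝ) (b : Fin n) : ℝ :=
  θ0 b + if rev b then q b else 0

/-- DH joint offset `d_b(q)`: `d_b = d0_b` for a revolute joint, `d_b = d0_b + q_b`
for a prismatic one. -/
def dhD {n : ℕ} (rev : Fin n → Bool) (d0 : Fin n → ℝ) (q : Fin n → ℝ) (b : Fin n) : ℝ :=
  d0 b + if rev b then 0 else q b

/-- Relative link rotation `R_b^{b-1}(q) = R_z(θ_b) R_x(α_b)`
(0-based index `b : Fin n` for joint `b+1`). -/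
def dhRrel {n : ℕ} (rev : Fin n → Bool) (θ0 αDH : Fin n → ℝ) (q : Fin n → ℝ) (b : Fin n) :
    Matrix (Fin 3) (Fin 3) ℝ :=
  RzMat (dhTheta rev θ0 q b) * RxMat (αDH b)

/-- Cumulative rotation `R_i^0(q) = R_1^0(q) ⋯ R_i^{i-1}(q)` (meaningful for `i ≤ n`),
with `R_0^0 = 1`. -/
def dhR0 {n : ℕ} (rev : Fin n → Bool) (θ0 αDH : Fin n → ℝ) (q : Fin n → ℝ) :
    ℕ → Matrix (Fin 3) (Fin 3) ℝ
  | 0 => 1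
  | j + 1 =>
      dhR0 rev θ0 αDH q j * (if h : j < n then dhRrel rev θ0 αDH q ⟨j, h⟩ else 1)

/-- Relative link translation `l_b^{b-1}(q) = (0,0,d_b)ᵀ + R_z(θ_b) (a_b,0,0)ᵀ`. -/
def dhLrel {n : ℕ} (rev : Fin n → Bool) (θ0 d0 aDH : Fin n → ℝ) (q : Fin n → ℝ) (b : Fin n) :
    Fin 3 → ℝ :=
  ![0, 0, dhD rev d0 q b] + (RzMat (dhTheta rev θ0 q b)).mulVec ![aDH b, 0, 0]

/-- Center of mass `c_i(q) = Σ_{j=1}^{i} R_{j-1}^0(q) l_j^{j-1}(q) + R_i^0(q) c_i^i`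
(0-based index `i : Fin n` for link `i+1`; `cloc i` is the constant `c_i^i`). -/
def dhCom {n : ℕ} (rev : Fin n → Bool) (θ0 d0 aDH αDH : Fin n → ℝ)
    (cloc : Fin n → Fin 3 → ℝ) (q : Fin n → ℝ) (i : Fin n) : Fin 3 → ℝ :=
  (∑ j : Fin n, if j ≤ i then (dhR0 rev θ0 αDH q j.val).mulVec (dhLrel rev θ0 d0 aDH q j) else 0)
    + (dhR0 rev θ0 αDH q (i.val + 1)).mulVec (cloc i)

/-- Partial derivative of `f : ℝⁿ → ℝ` with respect to the `k`-th coordinate, at `q`. -/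
def pd {n : ℕ} (f : (Fin n → ℝ) → ℝ) (k : Fin n) (q : Fin n → ℝ) : ℝ :=
  deriv (fun t => f (Function.update q k t)) (q k)

/-- Linear Jacobian `J_i(q) ∈ ℝ^{3×n}`, whose `k`-th column is `∂c_i/∂q_k`. -/
def dhJlin {n : ℕ} (rev : Fin n → Bool) (θ0 d0 aDH αDH : Fin n → ℝ)
    (cloc : Fin n → Fin 3 → ℝ) (q : Fin n → ℝ) (i : Fin n) : Matrix (Fin 3) (Fin n) ℝ :=
  Matrix.of fun r k => pd (fun q' => dhCom rev θ0 d0 aDH αDH cloc q' i r) k q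

/-- Angular Jacobian `J_{ω,i}(q) ∈ ℝ^{3×n}`: the `j`-th column is `λ_j R_{j-1}^0(q) e_3`
for `j ≤ i` and `0` for `j > i`, where `λ_j = 1` iff joint `j` is revolute. -/
def dhJang {n : ℕ} (rev : Fin n → Bool) (θ0 αDH : Fin n → ℝ) (q : Fin n → ℝ) (i : Fin n) :
    Matrix (Fin 3) (Fin n) ℝ :=
  Matrix.of fun r j =>
    if j ≤ i then
      (if rev j then (1 : ℝ) else 0) * (dhR0 rev θ0 αDH q j.val).mulVec ![0, 0, 1] r
    else 0

/-- Inertia matrix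
`B(q) = Σ_i [ m_i J_i(q)ᵀ J_i(q) + J_{ω,i}(q)ᵀ R_i^0(q) I_i (R_i^0(q))ᵀ J_{ω,i}(q) ]`. -/
def dhB {n : ℕ} (rev : Fin n → Bool) (θ0 d0 aDH αDH : Fin n → ℝ)
    (cloc : Fin n → Fin 3 → ℝ) (m : Fin n → ℝ) (Iner : Fin n → Matrix (Fin 3) (Fin 3) ℝ)
    (q : Fin n → ℝ) : Matrix (Fin n) (Fin n) ℝ :=
  ∑ i : Fin n,
    (m i • ((dhJlin rev θ0 d0 aDH αDH cloc q i)ᵀ * dhJlin rev θ0 d0 aDH αDH cloc q i)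
      + (dhJang rev θ0 αDH q i)ᵀ * dhR0 rev θ0 αDH q (i.val + 1) * Iner i *
          (dhR0 rev θ0 αDH q (i.val + 1))ᵀ * dhJang rev θ0 αDH q i)

/-- `i`-th component of the Coriolis contribution
`(C(q,q̇) q̇)_i = Σ_j Σ_k ( ∂b_{ij}/∂q_k − (1/2) ∂b_{jk}/∂q_i ) q̇_k q̇_j`. -/
def dhCor {n : ℕ} (rev : Fin n → Bool) (θ0 d0 aDH αDH : Fin n → ℝ)
    (cloc : Fin n → Fin 3 → ℝ) (m : Fin n → ℝ) (Iner : Fin n → Matrix (Fin 3) (Fin 3) ℝ)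
    (q qd : Fin n → ℝ) (i : Fin n) : ℝ :=
  ∑ j : Fin n, ∑ k : Fin n,
    (pd (fun q' => dhB rev θ0 d0 aDH αDH cloc m Iner q' i j) k q
        - (1 / 2) * pd (fun q' => dhB rev θ0 d0 aDH αDH cloc m Iner q' j k) i q)
      * qd k * qd j

/-- Potential energy `U(q) = Σ_j m_j g_0ᵀ c_j(q)`. -/
def dhU {n : ℕ} (rev : Fin n → Bool) (θ0 d0 aDH αDH : Fin n → ℝ)
    (cloc : Fin n → Fin 3 → ℝ) (m : Fin n → ℝ) (g0 : Fin 3 → ℝ) (q : Fin n → ℝ) : ℝ :=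
  ∑ j : Fin n, m j * ∑ r : Fin 3, g0 r * dhCom rev θ0 d0 aDH αDH cloc q j r

/-- Gravity torque `g_i(q) = ∂U/∂q_i`. -/
def dhGrav {n : ℕ} (rev : Fin n → Bool) (θ0 d0 aDH αDH : Fin n → ℝ)
    (cloc : Fin n → Fin 3 → ℝ) (m : Fin n → ℝ) (g0 : Fin 3 → ℝ)
    (q : Fin n → ℝ) (i : Fin n) : ℝ :=
  pd (dhU rev θ0 d0 aDH αDH cloc m g0) i q

/-- Inverse dynamics torque `τ_i(q,q̇,q̈) = ( B(q) q̈ + C(q,q̇) q̇ + g(q) )_i`. -/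
def dhTau {n : ℕ} (rev : Fin n → Bool) (θ0 d0 aDH αDH : Fin n → ℝ)
    (cloc : Fin n → Fin 3 → ℝ) (m : Fin n → ℝ) (Iner : Fin n → Matrix (Fin 3) (Fin 3) ℝ)
    (g0 : Fin 3 → ℝ) (q qd qdd : Fin n → ℝ) (i : Fin n) : ℝ :=
  (∑ k : Fin n, dhB rev θ0 d0 aDH αDH cloc m Iner q i k * qdd k)
    + dhCor rev θ0 d0 aDH αDH cloc m Iner q qd i
    + dhGrav rev θ0 d0 aDH αDH cloc m g0 q i

/-- Formal position variables: `.inl b ↦ c_b = cos q_b`, `.inr (.inl b) ↦ s_b = sin q_b`,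
`.inr (.inr b) ↦ x_b = q_b`. -/
abbrev PosVar (n : ℕ) := Fin n ⊕ (Fin n ⊕ Fin n)

/-- The formal variable `c_b` (for `cos q_b`). -/
def cVar {n : ℕ} (b : Fin n) : PosVar n := Sum.inl b

/-- The formal variable `s_b` (for `sin q_b`). -/
def sVar {n : ℕ} (b : Fin n) : PosVar n := Sum.inr (Sum.inl b)

/-- The formal variable `x_b` (for the prismatic coordinate `q_b`). -/
def xVar {n : ℕ} (b : Fin n) : PosVar n := Sum.inr (Sum.inr b)

/-- Evaluation of the formal position variables at a configuration `q`. -/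
def posEval {n : ℕ} (q : Fin n → ℝ) : PosVar n → ℝ :=
  Sum.elim (fun b => Real.cos (q b)) (Sum.elim (fun b => Real.sin (q b)) fun b => q b)

/-- Index set of the velocity-product variables `v_{jk}`, `j ≤ k`. -/
abbrev VelIdx (n : ℕ) := {pr : Fin n × Fin n // pr.1 ≤ pr.2}

/-- Formal dynamic variables: the position variables together with the velocity products
`v_{jk}` and the accelerations `a_k`. -/
abbrev DynVar (n : ℕ) := PosVar n ⊕ (VelIdx n ⊕ Fin n)

/-- The formal variable `v_{jk}` (for `q̇_j q̇_k`). -/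
def vVar {n : ℕ} (jk : VelIdx n) : DynVar n := Sum.inr (Sum.inl jk)

/-- The formal variable `a_k` (for `q̈_k`). -/
def aVar {n : ℕ} (k : Fin n) : DynVar n := Sum.inr (Sum.inr k)

/-- Evaluation of the formal dynamic variables at `(q, q̇, q̈)`. -/
def dynEval {n : ℕ} (q qd qdd : Fin n → ℝ) : DynVar n → ℝ :=
  Sum.elim (posEval q) (Sum.elim (fun jk => qd jk.val.1 * qd jk.val.2) qdd)

/-- The function `f` of the configuration is a polynomial in `c_b = cos q_b`, `s_b = sin q_b`,
every monomial of which has degree at most `d b` in the pair `(c_b, s_b)`. -/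
def JointPoly {n : ℕ} (d : Fin n → ℕ) (f : (Fin n → ℝ) → ℝ) : Prop :=
  ∃ P : MvPolynomial (Fin n ⊕ Fin n) ℝ,
    (∀ μ ∈ P.support, ∀ b : Fin n, μ (Sum.inl b) + μ (Sum.inr b) ≤ d b) ∧
    ∀ q : Fin n → ℝ,
      MvPolynomial.eval (Sum.elim (fun b => Real.cos (q b)) fun b => Real.sin (q b)) P = f q

namespace JointPoly

variable {n : ℕ} {d e : Fin n → ℕ} {f g : (Fin n → ℝ) → ℝ}

lemma mono (hf : JointPoly d f) (h : d ≤ e) : JointPoly e f := by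
  obtain ⟨P, hP, hq⟩ := hf
  exact ⟨P, fun μ hμ b => (hP μ hμ b).trans (h b), hq⟩

lemma const (d : Fin n → ℕ) (c : ℝ) : JointPoly d fun _ => c := by
  refine ⟨MvPolynomial.C c, fun μ hμ b => ?_, fun q => by simp⟩
  have h0 : μ = 0 := by
    by_contra h
    rw [MvPolynomial.mem_support_iff, MvPolynomial.coeff_C, if_neg (Ne.symm h)] at hμ
    exact hμ rfl
  simp [h0]

lemma add (hf : JointPoly d f) (hg : JointPoly d g) : JointPoly d fun q => f q + g q := by
  classical
  obtain ⟨P, hP, hPq⟩ := hf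
  obtain ⟨Q, hQ, hQq⟩ := hg
  refine ⟨P + Q, fun μ hμ b => ?_, fun q => by simp [hPq, hQq]⟩
  rcases Finset.mem_union.1 (MvPolynomial.support_add hμ) with h | h
  · exact hP μ h b
  · exact hQ μ h b

lemma mul (hf : JointPoly d f) (hg : JointPoly e g) :
    JointPoly (d + e) fun q => f q * g q := by
  classical
  obtain ⟨P, hP, hPq⟩ := hf
  obtain ⟨Q, hQ, hQq⟩ := hg
  refine ⟨P * Q, fun μ hμ b => ?_, fun q => by simp [hPq, hQq]⟩
  obtain ⟨x, hx, y, hy, rfl⟩ := Finset.mem_add.1 (MvPolynomial.support_mul P Q hμ)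
  have h1 := hP x hx b
  have h2 := hQ y hy b
  simp only [Finsupp.add_apply, Pi.add_apply]
  omega

lemma const_mul (c : ℝ) (hf : JointPoly d f) : JointPoly d fun q => c * f q := by
  simpa using (const 0 c).mul hf

lemma sum {ι : Type*} (s : Finset ι) {F : ι → (Fin n → ℝ) → ℝ}
    (h : ∀ x ∈ s, JointPoly d (F x)) : JointPoly d fun q => ∑ x ∈ s, F x q := by
  classical
  induction s using Finset.induction_on with
  | empty => simpa using const d 0
  | insert a s ha ih =>
    simp only [Finset.sum_insert ha]
    exact (h a (by simp)).add (ih fun x hx => h x (by simp [hx]))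

lemma cos_coord (b : Fin n) : JointPoly (Pi.single b 1) fun q => Real.cos (q b) := by
  refine ⟨MvPolynomial.X (Sum.inl b), fun μ hμ a => ?_, fun q => by simp⟩
  rw [MvPolynomial.support_X, Finset.mem_singleton] at hμ
  subst hμ
  by_cases h : a = b
  · subst h; simp
  · simp [h]

lemma sin_coord (b : Fin n) : JointPoly (Pi.single b 1) fun q => Real.sin (q b) := by
  refine ⟨MvPolynomial.X (Sum.inr b), fun μ hμ a => ?_, fun q => by simp⟩
  rw [MvPolynomial.support_X, Finset.mem_singleton] at hμ
  subst hμ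
  by_cases h : a = b
  · subst h; simp
  · simp [h]

/-- The entries of a relative rotation have joint degree at most one in its own angle if the
joint is revolute, and are constant if it is prismatic. -/
lemma relRotation (rev : Fin n → Bool) (θ0 αDH : Fin n → ℝ) (b : Fin n) (r s : Fin 3) :
    JointPoly (Pi.single b (if rev b then 1 else 0))
      fun q => dhRrel rev θ0 αDH q b r s := by
  by_cases hb : rev b = true
  · rw [if_pos hb]
    have hc : JointPoly (Pi.single b 1)
        fun q => Real.cos (θ0 b + q b) := by
      have h := ((cos_coord b).const_mul (Real.cos (θ0 b))).add
        ((sin_coord b).const_mul (-Real.sin (θ0 b)))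
      convert h using 2 with q
      rw [Real.cos_add]; ring
    have hs : JointPoly (Pi.single b 1)
        fun q => Real.sin (θ0 b + q b) := by
      have h := ((cos_coord b).const_mul (Real.sin (θ0 b))).add
        ((sin_coord b).const_mul (Real.cos (θ0 b)))
      convert h using 2 with q
      rw [Real.sin_add]
    have hz : ∀ r t : Fin 3, JointPoly (Pi.single b 1)
        fun q => RzMat (dhTheta rev θ0 q b) r t := by
      intro r t
      have hns := hs.const_mul (-1)
      simp only [neg_one_mul] at hns
      have h0 := const (Pi.single b 1) 0
      have h1 := const (Pi.single b 1) 1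
      fin_cases r <;> fin_cases t <;> simp [RzMat, dhTheta, hb] <;> assumption
    simp only [dhRrel, Matrix.mul_apply]
    refine sum _ fun t _ => ?_
    simpa only [mul_comm] using (hz r t).const_mul (RxMat (αDH b) t s)
  · simpa [dhRrel, dhTheta, hb] using
      const (Pi.single b (if rev b then 1 else 0)) ((RzMat (θ0 b) * RxMat (αDH b)) r s)

end JointPoly

lemma RzMat_transpose_mul (θ : ℝ) : (RzMat θ)ᵀ * RzMat θ = 1 := by
  ext r s
  have h := Real.sin_sq_add_cos_sq θ
  fin_cases r <;> fin_cases s <;>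
    simp [RzMat, Matrix.mul_apply, Fin.sum_univ_three] <;> linarith

lemma RxMat_transpose_mul (α : ℝ) : (RxMat α)ᵀ * RxMat α = 1 := by
  ext r s
  have h := Real.sin_sq_add_cos_sq α
  fin_cases r <;> fin_cases s <;>
    simp [RxMat, Matrix.mul_apply, Fin.sum_univ_three] <;> linarith

lemma dhRrel_transpose_mul {n : ℕ} (rev : Fin n → Bool) (θ0 αDH q : Fin n → ℝ) (b : Fin n) :
    (dhRrel rev θ0 αDH q b)ᵀ * dhRrel rev θ0 αDH q b = 1 := by
  rw [dhRrel, Matrix.transpose_mul, Matrix.mul_assoc, ← Matrix.mul_assoc _ (RzMat _),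
    RzMat_transpose_mul, Matrix.one_mul, RxMat_transpose_mul]

lemma dhR0_transpose_mul {n : ℕ} (rev : Fin n → Bool) (θ0 αDH q : Fin n → ℝ) (m : ℕ) :
    (dhR0 rev θ0 αDH q m)ᵀ * dhR0 rev θ0 αDH q m = 1 := by
  induction m with
  | zero => simp [dhR0]
  | succ m ih =>
    rw [dhR0, Matrix.transpose_mul, Matrix.mul_assoc, ← Matrix.mul_assoc _ (dhR0 _ _ _ _ _), ih,
      Matrix.one_mul]
    split_ifs
    · exact dhRrel_transpose_mul ..
    · simp

/-- The axis `R_j^0 e_3`, expressed in frame `m ≥ j`, has joint degree at most one in each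
revolute joint preceding frame `m`. The induction starts at `m = j`, where orthogonality of
`R_j^0` reduces the vector to `e_3`. -/
lemma JointPoly.linkAxis {n : ℕ} (rev : Fin n → Bool) (θ0 αDH : Fin n → ℝ) {j m : ℕ}
    (hjm : j ≤ m) (hm : m ≤ n) (r : Fin 3) :
    JointPoly (fun b : Fin n => if rev b = true ∧ b.val < m then 1 else 0)
      fun q => ((dhR0 rev θ0 αDH q m)ᵀ *ᵥ (dhR0 rev θ0 αDH q j *ᵥ ![0, 0, 1])) r := by
  induction m, hjm using Nat.le_induction generalizing r with
  | base =>
    simpa only [Matrix.mulVec_mulVec, dhR0_transpose_mul, Matrix.one_mulVec] using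
      JointPoly.const _ ((![0, 0, 1] : Fin 3 → ℝ) r)
  | succ m hjm ih =>
    have hlt : m < n := hm
    have hstep : JointPoly (fun b : Fin n => if rev b = true ∧ b.val < m + 1 then 1 else 0)
        fun q => ∑ t : Fin 3, dhRrel rev θ0 αDH q ⟨m, hlt⟩ t r *
          ((dhR0 rev θ0 αDH q m)ᵀ *ᵥ (dhR0 rev θ0 αDH q j *ᵥ ![0, 0, 1])) t := by
      refine .sum _ fun t _ => ((JointPoly.relRotation rev θ0 αDH ⟨m, hlt⟩ t r).mul
        (ih hlt.le t)).mono fun b => ?_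
      -- joint `m` contributes only to the new factor, the earlier joints only to the old one
      by_cases hb : b = ⟨m, hlt⟩
      · subst hb; simp
      · simp only [Pi.add_apply, Pi.single_eq_of_ne hb, zero_add]
        split_ifs <;> first | omega | grind
    convert hstep using 2 with q
    simp only [dhR0, dif_pos hlt, Matrix.transpose_mul, ← Matrix.mulVec_mulVec]
    rfl

/-- For every `i` and every symmetric `I_i ∈ ℝ^{3×3}`, every entry of
`J_{ω,i}(q)ᵀ R_i^0(q) I_i (R_i^0(q))ᵀ J_{ω,i}(q)` is a polynomial of total degree at
most `2 |{r ∈ I_r : r ≤ i}|` in the formal variables `c_r, s_r` for the revolute joints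
`r ≤ i`, in which every monomial satisfies `deg c_b + deg s_b ≤ 2` for every `b`. -/
theorem angular_inertia_entries_polynomial
    {n : ℕ} (rev : Fin n → Bool) (θ0 αDH : Fin n → ℝ) (i : Fin n)
    (Iner : Matrix (Fin 3) (Fin 3) ℝ) (hIner : Iner.IsSymm) (j k : Fin n) :
    ∃ P : MvPolynomial (Fin n ⊕ Fin n) ℝ,
      P.totalDegree ≤ 2 * (Finset.univ.filter fun b : Fin n => rev b = true ∧ b ≤ i).card ∧
      (∀ μ ∈ P.support, ∀ b : Fin n,
        μ (Sum.inl b) + μ (Sum.inr b) ≤ 2 ∧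
        (¬(rev b = true ∧ b ≤ i) → μ (Sum.inl b) = 0 ∧ μ (Sum.inr b) = 0)) ∧
      ∀ q : Fin n → ℝ,
        MvPolynomial.eval (Sum.elim (fun b => Real.cos (q b)) fun b => Real.sin (q b)) P
          = ((dhJang rev θ0 αDH q i)ᵀ * dhR0 rev θ0 αDH q (i.val + 1) * Iner *
              (dhR0 rev θ0 αDH q (i.val + 1))ᵀ * dhJang rev θ0 αDH q i) j k := by
  set d : Fin n → ℕ := fun b => if rev b = true ∧ b ≤ i then 1 else 0 with hd
  have hcol : ∀ (r : Fin 3) (l : Fin n), JointPoly d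
      fun q => ((dhR0 rev θ0 αDH q (i.val + 1))ᵀ * dhJang rev θ0 αDH q i) r l := by
    intro r l
    by_cases hl : l ≤ i
    · have h := (JointPoly.linkAxis rev θ0 αDH (show l.val ≤ i.val + 1 by
        have := Fin.le_def.1 hl; omega) i.isLt r).const_mul (if rev l then 1 else 0)
      convert h using 2 with b q
      · simp only [hd, Fin.le_def, Nat.lt_succ_iff]
      · simp only [Matrix.mul_apply, dhJang, Matrix.of_apply, if_pos hl]
        rw [Matrix.mulVec, dotProduct, Finset.mul_sum]
        exact Finset.sum_congr rfl fun t _ => by ring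
    · simpa [Matrix.mul_apply, dhJang, hl] using JointPoly.const d 0
  have hentry : JointPoly (d + d) fun q =>
      ((dhJang rev θ0 αDH q i)ᵀ * dhR0 rev θ0 αDH q (i.val + 1) * Iner *
        (dhR0 rev θ0 αDH q (i.val + 1))ᵀ * dhJang rev θ0 αDH q i) j k := by
    have h : JointPoly (d + d) fun q => ∑ s : Fin 3, ∑ r : Fin 3, Iner r s *
        (((dhR0 rev θ0 αDH q (i.val + 1))ᵀ * dhJang rev θ0 αDH q i) r j *
        ((dhR0 rev θ0 αDH q (i.val + 1))ᵀ * dhJang rev θ0 αDH q i) s k) :=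
      .sum _ fun s _ => .sum _ fun r _ => ((hcol r j).mul (hcol s k)).const_mul _
    convert h using 2 with q
    have e : (dhJang rev θ0 αDH q i)ᵀ * dhR0 rev θ0 αDH q (i.val + 1) =
        ((dhR0 rev θ0 αDH q (i.val + 1))ᵀ * dhJang rev θ0 αDH q i)ᵀ := by
      rw [Matrix.transpose_mul, Matrix.transpose_transpose]
    rw [e, Matrix.mul_assoc _ _ (dhJang rev θ0 αDH q i)]
    generalize (dhR0 rev θ0 αDH q (i.val + 1))ᵀ * dhJang rev θ0 αDH q i = U
    rw [Matrix.mul_apply]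
    refine Finset.sum_congr rfl fun s _ => ?_
    rw [Matrix.mul_apply, Finset.sum_mul]
    refine Finset.sum_congr rfl fun r _ => ?_
    rw [Matrix.transpose_apply]
    ring
  obtain ⟨P, hP, hq⟩ := hentry
  refine ⟨P, ?_, fun μ hμ b => ?_, hq⟩
  · refine Finset.sup_le fun μ hμ => ?_
    rw [Finsupp.sum_fintype _ _ fun _ => rfl, Fintype.sum_sum_type, ← Finset.sum_add_distrib]
    refine (Finset.sum_le_sum fun b _ => hP μ hμ b).trans (le_of_eq ?_)
    simp [hd, Finset.sum_add_distrib, two_mul]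
  · have h := hP μ hμ b
    simp only [hd, Pi.add_apply] at h
    split_ifs at h with hb
    · exact ⟨h, fun hn => absurd hb hn⟩
    · exact ⟨by omega, fun _ => by omega⟩
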